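/- Let T be a finite simple graph that is a tree and has a vertex of degree at least 4. Then there exists a finite simple graph T' such that T' is a tree, every vertex of T' has degree at most 3, the number of vertices of T' is at most 2·|T| − 4 (where |T| is the number of vertices of T), and there is an injective group homomorphism from G(T) into G(T'). -/

import Mathlib

open SimpleGraph

/-- The set of commutator relations of a graph: one commutator for each edge. -/
def raagRels {V : Type} (G : SimpleGraph V) : Set (FreeGroup V) :=
  {r | ∃ u v : V, G.Adj u v ∧
    r = FreeGroup.of u * FreeGroup.of v * (FreeGroup.of u)⁻¹ * (FreeGroup.of v)⁻¹}

/-- The right-angled Artin group `A(G)` of a graph `G`. -/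
abbrev RAAG {V : Type} (G : SimpleGraph V) : Type := PresentedGroup (raagRels G)

/-- `G(Γ) = A(Γᶜ)`, the RAAG on the complement graph. -/
abbrev GG {V : Type} (G : SimpleGraph V) : Type := RAAG Gᶜ

/-- A linear forest: an acyclic graph all of whose vertices have degree at most 2. -/
def IsLinearForest {V : Type} (G : SimpleGraph V) : Prop :=
  G.IsAcyclic ∧ ∀ v : V, (G.neighborSet v).ncard ≤ 2

/-- The star of a vertex: the vertex together with its neighbours. -/
def starSet {V : Type} (G : SimpleGraph V) (v : V) : Set V :=
  insert v (G.neighborSet v)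

/-- The double `D_v(G)` of `G` along the star of `v`: original vertices together with
copies of the vertices outside the star. -/
def GraphDouble {V : Type} (G : SimpleGraph V) (v : V) :
    SimpleGraph (V ⊕ {w : V // w ∉ starSet G v}) :=
  SimpleGraph.fromRel (fun x y =>
    match x, y with
    | Sum.inl a, Sum.inl b => G.Adj a b
    | Sum.inr a, Sum.inr b => G.Adj a.1 b.1
    | Sum.inl a, Sum.inr b => a ∈ starSet G v ∧ G.Adj a b.1
    | Sum.inr _, Sum.inl _ => False)

/-- Subdivision of the edge `[v,w]` of `Λ`, with `none` as the new vertex. -/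
def SubdivEdge {V : Type} (Λ : SimpleGraph V) (v w : V) : SimpleGraph (Option V) :=
  SimpleGraph.fromRel (fun x y =>
    match x, y with
    | some a, some b => Λ.Adj a b ∧ ¬((a = v ∧ b = w) ∨ (a = w ∧ b = v))
    | some a, none => a = v ∨ a = w
    | none, some _ => False
    | none, none => False)

/-- The graph `Λ_u⁻(w₁,w₂)`, with `none` as the new vertex `v`. -/
def MinusGraph {V : Type} (Λ : SimpleGraph V) (u w₁ w₂ : V) : SimpleGraph (Option V) :=
  SimpleGraph.fromRel (fun x y =>
    match x, y with
    | some a, some b => Λ.Adj a b ∧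
        ¬((a = u ∧ b = w₁) ∨ (a = w₁ ∧ b = u) ∨ (a = u ∧ b = w₂) ∨ (a = w₂ ∧ b = u))
    | some a, none => a = w₁ ∨ a = u ∨ a = w₂
    | none, some _ => False
    | none, none => False)

/-- The graph `Λ_u⁺(w₁,w₂)`: `Λ_u⁻(w₁,w₂)` with the edge `[u,w₂]` added back. -/
def PlusGraph {V : Type} (Λ : SimpleGraph V) (u w₁ w₂ : V) : SimpleGraph (Option V) :=
  SimpleGraph.fromRel (fun x y =>
    (MinusGraph Λ u w₁ w₂).Adj x y ∨ (x = some u ∧ y = some w₂))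

/-!
Contracting an edge `e = [x, y]` of a graph `M` yields an embedding `G(M/e) → G(M)`, Kim's
co-contraction, under which the contracted vertex goes to `x y x⁻¹`. For injectivity, let `G(M)` act
on two copies of `G(M/e)`: `x` swaps the copies and every other generator acts by left translation,
except that `y` fixes the first copy and the other neighbours of `x` fix the second one. The image
of `G(M/e)` then acts on the first copy by the regular representation.

If `w₁ ≠ w₂` are neighbours of `u` in `Γ`, then `Γ` is such a contraction of `Γ_u⁻(w₁,w₂)`. The
latter has one more edge and one new vertex, of degree `3`; the degree of `u` drops by one and the
other degrees stay the same. Doing this as long as some degree exceeds `3` adds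
`∑ max (deg v - 3) 0` vertices in total. Summing `deg v ≥ 1 + max (deg v - 3) 0`, where a vertex of
degree at least `3` leaves a surplus of `2`, bounds this number by `2|E| - |V| - 2`, which is
`|V| - 4` for a tree.
-/

namespace RAAG

variable {V : Type} {Γ : SimpleGraph V}

/-- The generator of `A(Γ)` attached to a vertex. -/
def of (Γ : SimpleGraph V) (v : V) : RAAG Γ :=
  PresentedGroup.of v

lemma commute_of_adj {a b : V} (h : Γ.Adj a b) : Commute (of Γ a) (of Γ b) := by
  rw [← commutatorElement_eq_one_iff_commute]
  exact PresentedGroup.one_of_mem (rels := raagRels Γ) ⟨a, b, h, rfl⟩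

/-- The universal property of `A(Γ)`: a map from the vertices to a group under which adjacent
vertices have commuting images extends to a homomorphism. -/
def lift {H : Type*} [Group H] (f : V → H) (hf : ∀ a b, Γ.Adj a b → Commute (f a) (f b)) :
    RAAG Γ →* H :=
  PresentedGroup.toGroup (f := f) <| by
    rintro _ ⟨a, b, hab, rfl⟩
    rw [← commutatorElement_def, map_commutatorElement, FreeGroup.lift_apply_of,
      FreeGroup.lift_apply_of]
    exact commutatorElement_eq_one_iff_commute.2 (hf a b hab)

@[simp]
lemma lift_of {H : Type*} [Group H] (f : V → H) (hf : ∀ a b, Γ.Adj a b → Commute (f a) (f b))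
    (v : V) : lift f hf (of Γ v) = f v :=
  PresentedGroup.toGroup.of _

lemma hom_ext {H : Type*} [Group H] {φ ψ : RAAG Γ →* H} (h : ∀ v, φ (of Γ v) = ψ (of Γ v)) :
    φ = ψ :=
  PresentedGroup.ext h

open Classical in
/-- The endomorphism of `A(Γ)` that sends the generators in `s` to `1` and fixes the others: the
retraction onto the subgroup generated by the vertices outside `s`. -/
noncomputable def kill (Γ : SimpleGraph V) (s : Set V) : RAAG Γ →* RAAG Γ :=
  lift (fun v => if v ∈ s then 1 else of Γ v) fun a b hab => by
    split_ifs <;> simp [commute_of_adj hab]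

lemma kill_of_mem {s : Set V} {v : V} (hv : v ∈ s) : kill Γ s (of Γ v) = 1 := by
  simp [kill, hv]

lemma kill_of_notMem {s : Set V} {v : V} (hv : v ∉ s) : kill Γ s (of Γ v) = of Γ v := by
  simp [kill, hv]

lemma kill_of_congr {s t : Set V} {v : V} (h : v ∈ s ↔ v ∈ t) :
    kill Γ s (of Γ v) = kill Γ t (of Γ v) := by
  by_cases hv : v ∈ t
  · rw [kill_of_mem hv, kill_of_mem (h.2 hv)]
  · rw [kill_of_notMem hv, kill_of_notMem (mt h.1 hv)]

end RAAG

section DoubledRegularAction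

variable (A : Type*) [Group A]

/-- The action of `A × A` on two copies of `A`, each factor translating its own copy. Together with
the swap of the two copies it generates the wreath product of `A` with a group of order two. -/
def doubledRegularAction : A × A →* Equiv.Perm (A ⊕ A) :=
  (Equiv.Perm.sumCongrHom A A).comp
    ((MulAction.toPermHom A A).prodMap (MulAction.toPermHom A A))

lemma doubledRegularAction_injective : Function.Injective (doubledRegularAction A) :=
  Equiv.Perm.sumCongrHom_injective.comp
    (MulAction.toPerm_injective.prodMap MulAction.toPerm_injective)

lemma sumComm_mul_doubledRegularAction (g h : A) :
    Equiv.sumComm A A * doubledRegularAction A (g, h) =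
      doubledRegularAction A (h, g) * Equiv.sumComm A A := by
  ext (x | x) <;> rfl

end DoubledRegularAction

section CoContraction

variable {V : Type} {M : SimpleGraph (Option V)} {u : V}

/-- The graph obtained from `M` by identifying the vertex `none` with `some u`. It is the
contraction of the edge `[none, some u]` when this is an edge of `M`. -/
def edgeContraction (M : SimpleGraph (Option V)) (u : V) : SimpleGraph V :=
  M.map fun x => x.getD u

lemma compl_adj_of_compl_edgeContraction_adj {x y : Option V}
    (h : (edgeContraction M u)ᶜ.Adj (x.getD u) (y.getD u)) : Mᶜ.Adj x y := by
  rw [compl_adj] at h ⊢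
  exact ⟨fun hxy => h.1 (congrArg (Option.getD · u) hxy), fun hxy => h.2 (map_adj_apply' hxy h.1)⟩

lemma edgeContraction_adj_cases {a b : V} (h : (edgeContraction M u).Adj a b) :
    M.Adj (some a) (some b) ∨ (a = u ∧ M.Adj none (some b)) ∨ (b = u ∧ M.Adj none (some a)) := by
  obtain ⟨hne, _ | x, _ | y, hxy, rfl, rfl⟩ := h
  · exact absurd rfl hne
  · exact .inr (.inl ⟨rfl, hxy⟩)
  · exact .inr (.inr ⟨rfl, hxy.symm⟩)
  · exact .inl hxy

lemma connected_of_edgeContraction_connected (hu : M.Adj none (some u))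
    (h : (edgeContraction M u).Connected) : M.Connected := by
  have reachable_getD : ∀ x : Option V, M.Reachable x (some (x.getD u))
    | none => hu.reachable
    | some _ => .refl _
  have reachable_of_adj : ∀ a b, (edgeContraction M u).Adj a b →
      M.Reachable (some a) (some b) := by
    rintro _ _ ⟨-, x, y, hxy, rfl, rfl⟩
    exact (reachable_getD x).symm.trans (hxy.reachable.trans (reachable_getD y))
  have reachable_some : ∀ a b, M.Reachable (some a) (some b) := by
    intro a b
    obtain ⟨p⟩ := h.preconnected a b
    induction p with
    | nil => exact .refl _
    | cons hab _ ih => exact (reachable_of_adj _ _ hab).trans ih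
  exact { preconnected := fun x y =>
            (reachable_getD x).trans ((reachable_some _ _).trans (reachable_getD y).symm)
          nonempty := ⟨none⟩ }

open Classical in
/-- Images of the generators under the co-contraction homomorphism: the contracted vertex goes to
a conjugate of one of the ends of the edge by the other. -/
noncomputable def cocontractionGen (M : SimpleGraph (Option V)) (u v : V) : GG M :=
  if v = u then RAAG.of Mᶜ none * RAAG.of Mᶜ (some u) * (RAAG.of Mᶜ none)⁻¹
  else RAAG.of Mᶜ (some v)

lemma commute_cocontractionGen {a b : V} (h : (edgeContraction M u)ᶜ.Adj a b) :
    Commute (cocontractionGen M u a) (cocontractionGen M u b) := by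
  have commute_contracted : ∀ c, (edgeContraction M u)ᶜ.Adj u c →
      Commute (cocontractionGen M u u) (cocontractionGen M u c) := by
    intro c huc
    have commute_none : Commute (RAAG.of Mᶜ none) (RAAG.of Mᶜ (some c)) :=
      RAAG.commute_of_adj (compl_adj_of_compl_edgeContraction_adj huc)
    have commute_some : Commute (RAAG.of Mᶜ (some u)) (RAAG.of Mᶜ (some c)) :=
      RAAG.commute_of_adj (compl_adj_of_compl_edgeContraction_adj huc)
    simpa only [cocontractionGen, if_true, if_neg huc.ne'] using
      (commute_none.mul_left commute_some).mul_left commute_none.inv_left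
  by_cases ha : a = u
  · subst ha
    exact commute_contracted b h
  by_cases hb : b = u
  · subst hb
    exact (commute_contracted a h.symm).symm
  simp only [cocontractionGen, if_neg ha, if_neg hb]
  exact RAAG.commute_of_adj (compl_adj_of_compl_edgeContraction_adj h)

/-- The co-contraction homomorphism `G(M/e) → G(M)`, where `e` is the edge `[none, some u]`. -/
noncomputable def cocontraction (M : SimpleGraph (Option V)) (u : V) :
    GG (edgeContraction M u) →* GG M :=
  RAAG.lift (cocontractionGen M u) fun _ _ => commute_cocontractionGen

/-- Images of the generators of `G(M)` in the permutations of two copies of `G(M/e)`, where `e` is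
the edge `[none, some u]`. The vertex `none` swaps the copies; the first copy ignores `u` and the
second copy ignores the other neighbours of `none`. -/
noncomputable def doubledActionGen (M : SimpleGraph (Option V)) (u : V) :
    Option V → Equiv.Perm (GG (edgeContraction M u) ⊕ GG (edgeContraction M u))
  | none => Equiv.sumComm _ _
  | some v => doubledRegularAction _
      (RAAG.kill _ {u} (RAAG.of _ v), RAAG.kill _ {w | w ≠ u ∧ M.Adj none (some w)} (RAAG.of _ v))

lemma commute_doubledActionGen_none {c : V} (hu : M.Adj none (some u))
    (hc : ¬M.Adj none (some c)) :
    Commute (doubledActionGen M u none) (doubledActionGen M u (some c)) := by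
  have hcu : c ≠ u := by
    rintro rfl
    exact hc hu
  simp only [doubledActionGen]
  rw [RAAG.kill_of_notMem (by simpa using hcu), RAAG.kill_of_notMem (by simp [hc])]
  exact sumComm_mul_doubledRegularAction _ _ _

lemma commute_doubledActionGen_some_some {a b : V} (h : Mᶜ.Adj (some a) (some b)) :
    Commute (doubledActionGen M u (some a)) (doubledActionGen M u (some b)) := by
  have commute_contracted_neighbor : ∀ c, c ≠ u → M.Adj none (some c) →
      Commute (doubledActionGen M u (some u)) (doubledActionGen M u (some c)) := by
    intro c hcu hc
    refine Commute.map (Prod.commute_iff.2 ⟨?_, ?_⟩) _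
    · simp only [RAAG.kill_of_mem (Set.mem_singleton u), Commute.one_left]
    · simp only [RAAG.kill_of_mem (s := {w | w ≠ u ∧ M.Adj none (some w)}) ⟨hcu, hc⟩,
        Commute.one_right]
  obtain ⟨hne, hM⟩ := (compl_adj ..).1 h
  by_cases hab : (edgeContraction M u).Adj a b
  · rcases edgeContraction_adj_cases hab with hM' | ⟨rfl, hb⟩ | ⟨rfl, ha⟩
    · exact absurd hM' hM
    · exact commute_contracted_neighbor b hab.ne' hb
    · exact (commute_contracted_neighbor a hab.ne ha).symm
  · have hcomm : Commute (RAAG.of (edgeContraction M u)ᶜ a) (RAAG.of (edgeContraction M u)ᶜ b) :=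
      RAAG.commute_of_adj ((compl_adj ..).2 ⟨fun e => hne (congrArg some e), hab⟩)
    exact Commute.map (Prod.commute_iff.2 ⟨hcomm.map _, hcomm.map _⟩) _

/-- The action of `G(M)` on two copies of `G(M/e)`, where `e` is the edge `[none, some u]`. -/
noncomputable def doubledAction (hu : M.Adj none (some u)) :
    GG M →* Equiv.Perm (GG (edgeContraction M u) ⊕ GG (edgeContraction M u)) :=
  RAAG.lift (doubledActionGen M u) fun
    | none, none, _ => .refl _
    | none, some _, h => commute_doubledActionGen_none hu ((compl_adj ..).1 h).2
    | some _, none, h => (commute_doubledActionGen_none hu ((compl_adj ..).1 h.symm).2).symm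
    | some _, some _, h => commute_doubledActionGen_some_some h

lemma doubledAction_comp_cocontraction (hu : M.Adj none (some u)) :
    (doubledAction hu).comp (cocontraction M u) =
      (doubledRegularAction _).comp
        ((MonoidHom.id _).prod (RAAG.kill _ {w | M.Adj none (some w)})) := by
  refine RAAG.hom_ext fun v => ?_
  by_cases hv : v = u
  · subst hv
    simp only [MonoidHom.comp_apply, MonoidHom.prod_apply, MonoidHom.id_apply, cocontraction,
      RAAG.lift_of, cocontractionGen, if_true, map_mul, map_inv, doubledAction, doubledActionGen,
      sumComm_mul_doubledRegularAction, mul_inv_cancel_right]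
    rw [RAAG.kill_of_mem (Set.mem_singleton v), RAAG.kill_of_notMem (by simp),
      RAAG.kill_of_mem (by exact hu)]
  · simp only [MonoidHom.comp_apply, MonoidHom.prod_apply, MonoidHom.id_apply, cocontraction,
      RAAG.lift_of, cocontractionGen, if_neg hv, doubledAction, doubledActionGen]
    rw [RAAG.kill_of_notMem (by simpa using hv),
      RAAG.kill_of_congr (t := {w | M.Adj none (some w)}) (by simp [hv])]

theorem cocontraction_injective (hu : M.Adj none (some u)) :
    Function.Injective (cocontraction M u) := by
  have hinj : Function.Injective ((doubledAction hu).comp (cocontraction M u)) := by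
    rw [doubledAction_comp_cocontraction]
    exact (doubledRegularAction_injective _).comp fun _ _ h => congrArg Prod.fst h
  exact .of_comp hinj

end CoContraction

section DegreeExcess

variable {V : Type*} [Fintype V]

lemma sum_ncard_neighborSet_eq_twice_card_edgeSet (Γ : SimpleGraph V) :
    ∑ v, (Γ.neighborSet v).ncard = 2 * Nat.card Γ.edgeSet := by
  classical
  rw [Nat.card_eq_fintype_card, ← edgeFinset_card, ← Γ.sum_degrees_eq_twice_card_edges]
  exact Finset.sum_congr rfl fun v _ => by
    rw [Set.ncard_eq_toFinset_card', ← card_neighborFinset_eq_degree, neighborFinset]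

/-- The number of co-contractions needed to bring all degrees down to `3`. Truncated subtraction
makes the vertices of degree at most `3` contribute `0`. -/
noncomputable def degreeExcess (Γ : SimpleGraph V) : ℕ :=
  ∑ v, ((Γ.neighborSet v).ncard - 3)

lemma degreeExcess_eq_zero_iff {Γ : SimpleGraph V} :
    degreeExcess Γ = 0 ↔ ∀ v, (Γ.neighborSet v).ncard ≤ 3 := by
  simp [degreeExcess, Nat.sub_eq_zero_iff_le]

lemma card_add_degreeExcess_add_two_le {Γ : SimpleGraph V}
    (hpos : ∀ v, (Γ.neighborSet v).Nonempty) (hdeg : ∃ v, 3 ≤ (Γ.neighborSet v).ncard) :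
    Fintype.card V + degreeExcess Γ + 2 ≤ 2 * Nat.card Γ.edgeSet := by
  classical
  obtain ⟨u, hu⟩ := hdeg
  calc Fintype.card V + degreeExcess Γ + 2
      = ∑ v, (1 + ((Γ.neighborSet v).ncard - 3) + if v = u then 2 else 0) := by
        simp [degreeExcess, Finset.sum_add_distrib]
    _ ≤ ∑ v, (Γ.neighborSet v).ncard := by
        refine Finset.sum_le_sum fun v _ => ?_
        have : 0 < (Γ.neighborSet v).ncard := (hpos v).ncard_pos
        split_ifs with hv
        · subst hv
          omega
        · omega
    _ = 2 * Nat.card Γ.edgeSet := sum_ncard_neighborSet_eq_twice_card_edgeSet Γ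

end DegreeExcess

namespace MinusGraph

variable {V : Type} {Γ : SimpleGraph V} {u w₁ w₂ : V}

@[simp]
lemma adj_some_some {a b : V} : (MinusGraph Γ u w₁ w₂).Adj (some a) (some b) ↔ Γ.Adj a b ∧
    ¬((a = u ∧ b = w₁) ∨ (a = w₁ ∧ b = u) ∨ (a = u ∧ b = w₂) ∨ (a = w₂ ∧ b = u)) := by
  simp only [MinusGraph, fromRel_adj, ne_eq, Option.some.injEq]
  grind [Γ.adj_comm, Γ.ne_of_adj]

@[simp]
lemma adj_none_some {a : V} :
    (MinusGraph Γ u w₁ w₂).Adj none (some a) ↔ a = w₁ ∨ a = u ∨ a = w₂ := by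
  simp [MinusGraph]

@[simp]
lemma adj_some_none {a : V} :
    (MinusGraph Γ u w₁ w₂).Adj (some a) none ↔ a = w₁ ∨ a = u ∨ a = w₂ := by
  rw [adj_comm, adj_none_some]

lemma edgeContraction_eq (h₁ : Γ.Adj u w₁) (h₂ : Γ.Adj u w₂) :
    edgeContraction (MinusGraph Γ u w₁ w₂) u = Γ := by
  ext a b
  constructor
  · intro h
    rcases edgeContraction_adj_cases h with h' | ⟨rfl, h'⟩ | ⟨rfl, h'⟩
    · exact (adj_some_some.1 h').1
    · rcases adj_none_some.1 h' with rfl | rfl | rfl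
      exacts [h₁, absurd rfl h.ne, h₂]
    · rcases adj_none_some.1 h' with rfl | rfl | rfl
      exacts [h₁.symm, absurd rfl h.ne, h₂.symm]
  · intro h
    have adj_of_adj : ∀ x y : Option V, (MinusGraph Γ u w₁ w₂).Adj x y → x.getD u = a →
        y.getD u = b → (edgeContraction (MinusGraph Γ u w₁ w₂) u).Adj a b :=
      fun x y hxy hx hy => ⟨h.ne, x, y, hxy, hx, hy⟩
    by_cases hab : (MinusGraph Γ u w₁ w₂).Adj (some a) (some b)
    · exact adj_of_adj _ _ hab rfl rfl
    · have hremoved : (a = u ∧ (b = w₁ ∨ b = w₂)) ∨ (b = u ∧ (a = w₁ ∨ a = w₂)) := by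
        rw [adj_some_some] at hab
        tauto
      rcases hremoved with ⟨rfl, hb⟩ | ⟨rfl, ha⟩
      · exact adj_of_adj none (some b) (adj_none_some.2 (by tauto)) rfl rfl
      · exact adj_of_adj (some a) none (adj_some_none.2 (by tauto)) rfl rfl

lemma exists_injective_hom (h₁ : Γ.Adj u w₁) (h₂ : Γ.Adj u w₂) :
    ∃ φ : GG Γ →* GG (MinusGraph Γ u w₁ w₂), Function.Injective φ := by
  have hinj := cocontraction_injective (M := MinusGraph Γ u w₁ w₂) (u := u) (by simp)
  have hex : ∃ φ : GG (edgeContraction (MinusGraph Γ u w₁ w₂) u) →* GG (MinusGraph Γ u w₁ w₂),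
      Function.Injective φ := ⟨_, hinj⟩
  rwa [edgeContraction_eq h₁ h₂] at hex

lemma connected (hΓ : Γ.Connected) (h₁ : Γ.Adj u w₁) (h₂ : Γ.Adj u w₂) :
    (MinusGraph Γ u w₁ w₂).Connected :=
  connected_of_edgeContraction_connected (u := u) (by simp) <| by rwa [edgeContraction_eq h₁ h₂]

lemma ncard_neighborSet_none (h₁ : Γ.Adj u w₁) (h₂ : Γ.Adj u w₂) (hw : w₁ ≠ w₂) :
    ((MinusGraph Γ u w₁ w₂).neighborSet none).ncard = 3 := by
  have hN : (MinusGraph Γ u w₁ w₂).neighborSet none = some '' {w₁, u, w₂} := by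
    ext (_ | a) <;> simp
  rw [hN, Set.ncard_image_of_injective _ (Option.some_injective V)]
  exact Set.ncard_eq_three.2 ⟨w₁, u, w₂, h₁.ne', hw, h₂.ne, rfl⟩

lemma ncard_neighborSet_some_self [Finite V] (h₁ : Γ.Adj u w₁) (h₂ : Γ.Adj u w₂) (hw : w₁ ≠ w₂) :
    ((MinusGraph Γ u w₁ w₂).neighborSet (some u)).ncard + 1 = (Γ.neighborSet u).ncard := by
  have hN : (MinusGraph Γ u w₁ w₂).neighborSet (some u) =
      insert none (some '' (Γ.neighborSet u \ {w₁, w₂})) := by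
    ext (_ | a) <;> simp [h₁.ne, h₂.ne]
  have hsub : {w₁, w₂} ⊆ Γ.neighborSet u := Set.pair_subset h₁ h₂
  rw [hN, Set.ncard_insert_of_notMem (by simp),
    Set.ncard_image_of_injective _ (Option.some_injective V),
    ← Set.ncard_sdiff_add_ncard_of_subset hsub, Set.ncard_pair hw]

lemma ncard_neighborSet_some_of_ne {a : V} (h₁ : Γ.Adj u w₁) (h₂ : Γ.Adj u w₂) (ha : a ≠ u) :
    ((MinusGraph Γ u w₁ w₂).neighborSet (some a)).ncard = (Γ.neighborSet a).ncard := by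
  classical
  let redirect : V → Option V := fun b => if b = u ∧ (a = w₁ ∨ a = w₂) then none else some b
  have hredirect : Function.Injective redirect := by
    intro b c hbc
    grind
  have hN : (MinusGraph Γ u w₁ w₂).neighborSet (some a) = redirect '' Γ.neighborSet a := by
    ext (_ | b)
    · simp only [mem_neighborSet, adj_some_none, Set.mem_image, redirect]
      grind [Γ.adj_comm]
    · simp only [mem_neighborSet, adj_some_some, Set.mem_image, redirect]
      grind
  rw [hN, Set.ncard_image_of_injective _ hredirect]

lemma sum_comp_ncard_neighborSet [Fintype V] (h₁ : Γ.Adj u w₁) (h₂ : Γ.Adj u w₂) (hw : w₁ ≠ w₂)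
    (f : ℕ → ℕ) :
    ∑ x, f ((MinusGraph Γ u w₁ w₂).neighborSet x).ncard + f (Γ.neighborSet u).ncard =
      f 3 + f ((Γ.neighborSet u).ncard - 1) + ∑ v, f (Γ.neighborSet v).ncard := by
  classical
  have hrest : ∑ v ∈ Finset.univ.erase u, f ((MinusGraph Γ u w₁ w₂).neighborSet (some v)).ncard =
      ∑ v ∈ Finset.univ.erase u, f (Γ.neighborSet v).ncard :=
    Finset.sum_congr rfl fun v hv => by
      rw [ncard_neighborSet_some_of_ne h₁ h₂ (Finset.ne_of_mem_erase hv)]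
  rw [Fintype.sum_option, ncard_neighborSet_none h₁ h₂ hw,
    ← Finset.add_sum_erase _ _ (Finset.mem_univ u), hrest,
    ← Finset.add_sum_erase _ (fun v => f (Γ.neighborSet v).ncard) (Finset.mem_univ u),
    ← ncard_neighborSet_some_self h₁ h₂ hw, Nat.add_sub_cancel]
  ring

lemma card_edgeSet [Finite V] (h₁ : Γ.Adj u w₁) (h₂ : Γ.Adj u w₂) (hw : w₁ ≠ w₂) :
    Nat.card (MinusGraph Γ u w₁ w₂).edgeSet = Nat.card Γ.edgeSet + 1 := by
  have := Fintype.ofFinite V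
  have hsum := sum_comp_ncard_neighborSet h₁ h₂ hw id
  have hu : 0 < (Γ.neighborSet u).ncard := (Set.ncard_pos (Set.toFinite _)).2 ⟨w₁, h₁⟩
  simp only [id_eq, sum_ncard_neighborSet_eq_twice_card_edgeSet] at hsum
  omega

lemma degreeExcess_add_one [Fintype V] (h₁ : Γ.Adj u w₁) (h₂ : Γ.Adj u w₂) (hw : w₁ ≠ w₂)
    (hu : 4 ≤ (Γ.neighborSet u).ncard) :
    degreeExcess (MinusGraph Γ u w₁ w₂) + 1 = degreeExcess Γ := by
  have hsum : degreeExcess (MinusGraph Γ u w₁ w₂) + ((Γ.neighborSet u).ncard - 3) =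
      3 - 3 + ((Γ.neighborSet u).ncard - 1 - 3) + degreeExcess Γ :=
    sum_comp_ncard_neighborSet h₁ h₂ hw (· - 3)
  omega

end MinusGraph

theorem exists_subcubic_injective_hom {V : Type} [Fintype V] (Γ : SimpleGraph V) :
    ∃ (W : Type) (_ : Fintype W) (Γ' : SimpleGraph W), (Γ.Connected → Γ'.Connected) ∧
      (∀ w : W, (Γ'.neighborSet w).ncard ≤ 3) ∧
      Nat.card Γ'.edgeSet = Nat.card Γ.edgeSet + degreeExcess Γ ∧
      Fintype.card W = Fintype.card V + degreeExcess Γ ∧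
      ∃ φ : GG Γ →* GG Γ', Function.Injective φ := by
  induction hk : degreeExcess Γ generalizing V with
  | zero =>
    exact ⟨V, inferInstance, Γ, id, degreeExcess_eq_zero_iff.1 hk, rfl, rfl, MonoidHom.id _,
      Function.injective_id⟩
  | succ k ih =>
    obtain ⟨u, hu⟩ : ∃ u, 3 < (Γ.neighborSet u).ncard := by
      by_contra! hle
      have hzero := degreeExcess_eq_zero_iff.2 hle
      omega
    obtain ⟨w₁, h₁, w₂, h₂, hw⟩ := (Set.one_lt_ncard (Set.toFinite (Γ.neighborSet u))).1 (by omega)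
    have hexcess := MinusGraph.degreeExcess_add_one h₁ h₂ hw hu
    obtain ⟨W, _, Γ', hconn, hdeg, hedge, hcard, φ, hφ⟩ :=
      ih (MinusGraph Γ u w₁ w₂) (by omega)
    obtain ⟨φ₀, hφ₀⟩ := MinusGraph.exists_injective_hom h₁ h₂
    refine ⟨W, inferInstance, Γ', fun hΓ => hconn (MinusGraph.connected hΓ h₁ h₂), hdeg, ?_, ?_,
      φ.comp φ₀, hφ.comp hφ₀⟩
    · rw [hedge, MinusGraph.card_edgeSet h₁ h₂ hw]
      omega
    · rw [hcard, Fintype.card_option]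
      omega

theorem statement19_general {V : Type} [Fintype V] (Γ : SimpleGraph V) (hΓ : Γ.Connected)
    (hdeg : ∃ v : V, 3 ≤ (Γ.neighborSet v).ncard) :
    ∃ (W : Type) (_ : Fintype W) (Γ' : SimpleGraph W), Γ'.Connected ∧
      Nat.card Γ'.edgeSet + Fintype.card V = Nat.card Γ.edgeSet + Fintype.card W ∧
      (∀ w : W, (Γ'.neighborSet w).ncard ≤ 3) ∧
      Fintype.card W + 2 ≤ 2 * Nat.card Γ.edgeSet ∧
      ∃ φ : GG Γ →* GG Γ', Function.Injective φ := by
  have hnontrivial : Nontrivial V := by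
    obtain ⟨u, hu⟩ := hdeg
    obtain ⟨w, hw⟩ := Set.nonempty_of_ncard_ne_zero (by omega : (Γ.neighborSet u).ncard ≠ 0)
    exact ⟨u, w, hw.ne⟩
  have hbound := card_add_degreeExcess_add_two_le
    (fun v => hΓ.preconnected.exists_adj_of_nontrivial v) hdeg
  obtain ⟨W, _, Γ', hconn, hdeg', hedge, hcard, hφ⟩ := exists_subcubic_injective_hom Γ
  exact ⟨W, inferInstance, Γ', hconn hΓ, by omega, hdeg', by omega, hφ⟩

/-- If `T` is a finite tree with a vertex of degree at least 4, then there is a finite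
tree `T'` of maximum degree at most 3 with at most `2|T| - 4` vertices such that
`G(T) ↪ G(T')`. -/
theorem statement19 {V : Type} [Fintype V] (T : SimpleGraph V) (hT : T.IsTree)
    (hdeg : ∃ v : V, 4 ≤ (T.neighborSet v).ncard) :
    ∃ (W : Type) (_ : Fintype W) (T' : SimpleGraph W), T'.IsTree ∧
      (∀ w : W, (T'.neighborSet w).ncard ≤ 3) ∧
      Fintype.card W ≤ 2 * Fintype.card V - 4 ∧
      ∃ φ : GG T →* GG T', Function.Injective φ := by
  obtain ⟨hconn, hedge⟩ := isTree_iff_connected_and_card.1 hT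
  obtain ⟨W, _, T', hconn', hbetti, hdeg', hcard, hφ⟩ :=
    statement19_general T hconn (hdeg.imp fun _ => le_trans (by norm_num))
  simp only [Nat.card_eq_fintype_card (α := V)] at hedge
  refine ⟨W, inferInstance, T', isTree_iff_connected_and_card.2 ⟨hconn', ?_⟩, hdeg', by omega, hφ⟩
  rw [Nat.card_eq_fintype_card (α := W)]
  omega
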